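/- Let F be a conformal Frobenius manifold potential on M with Euler vector field E = Σ_γ E^γ∂/∂t^γ and conformal dimension δ, and set c^ν_{αβ} := η^{νμ}∂³F/∂t^μ∂t^α∂t^β. Let u be an analytic function on M satisfying c^ν_{αβ} ∂u/∂t^ν = ∂u/∂t^α · ∂u/∂t^β for all 1 ≤ α,β ≤ N, together with ∂u/∂t^1 = 1 and E^α ∂u/∂t^α = u + a for a constant a ∈ ℂ (as holds for each canonical coordinate of a semisimple conformal Frobenius manifold). Then the function F^o(t,s) := u(t)·s satisfies the open WDVV equations, the unit condition, and the homogeneity condition E^α ∂F^o/∂t^α + ((1−δ)/2)·s·∂F^o/∂s = ((3−δ)/2)·F^o + a·s. -/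

import Mathlib

/-!
The function `Fo = u(t) s` is linear in `s`, so its second derivatives are `s ∂_α∂_β u`, `∂_α u`
and `0`.  The second open WDVV equation, the unit condition and the homogeneity condition are then
direct restatements of the hypotheses on `u`.  For the first open WDVV equation, differentiate
`c^ν_{αβ} ∂_ν u = ∂_α u ∂_β u` along `t^γ`: this gives
`c^ν_{αβ} ∂_ν∂_γ u + ∂_α∂_β u ∂_γ u = (∂_α∂_γ u ∂_β u + ∂_α u ∂_β∂_γ u + ∂_α∂_β u ∂_γ u)
  - ∂_γ c^ν_{αβ} ∂_ν u`,
and the right-hand side is symmetric in `α, γ` because the derivatives of `F` commute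
(`pd_comm`).  The computation is `canonical_symm`.
-/

/-!
STATEMENT 17: For a conformal Frobenius manifold potential `F` and an analytic function
`u` satisfying `c^ν_{αβ} ∂u/∂t^ν = ∂u/∂t^α ∂u/∂t^β`, `∂u/∂t^1 = 1` and `E^α ∂u/∂t^α = u + a`
(as holds for canonical coordinates), the function `F^o(t,s) := u(t)·s` satisfies the open
WDVV equations, the unit condition, and the homogeneity condition
`E^α ∂F^o/∂t^α + ((1−δ)/2)·s·∂F^o/∂s = ((3−δ)/2)·F^o + a·s`.
-/

noncomputable section

abbrev Pt (n : ℕ) := Fin n → ℂ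
abbrev Fn (n : ℕ) := (Fin n → ℂ) → ℂ

noncomputable def pd {n : ℕ} (i : Fin n) (f : Fn n) : Fn n :=
  fun x => fderiv ℂ f x (Pi.single i 1)

def prj {N : ℕ} (x : Pt (N + 1)) : Pt N := fun i => x i.castSucc

lemma pd_eq {n : ℕ} {f : Fn n} {x : Pt n} {L : Pt n →L[ℂ] ℂ} (h : HasFDerivAt f L x)
    (i : Fin n) : pd i f x = L (Pi.single i 1) := by
  rw [pd, h.fderiv]

lemma pd_analytic {n : ℕ} {f : Fn n} {M : Set (Pt n)} (h : AnalyticOnNhd ℂ f M) (i : Fin n) :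
    AnalyticOnNhd ℂ (pd i f) M := fun x hx =>
  ((ContinuousLinearMap.apply ℂ ℂ (Pi.single i 1 : Pt n)).analyticAt _).comp (h.fderiv x hx)

lemma pd_congr {n : ℕ} {f g : Fn n} {M : Set (Pt n)} (hM : IsOpen M) (h : Set.EqOn f g M)
    {x : Pt n} (hx : x ∈ M) (i : Fin n) : pd i f x = pd i g x := by
  rw [pd, pd, Filter.EventuallyEq.fderiv_eq (h.eventuallyEq_of_mem (hM.mem_nhds hx))]

/-- Partial derivatives of an analytic function commute. -/
lemma pd_comm {n : ℕ} {f : Fn n} {x : Pt n} (h : AnalyticAt ℂ f x) (i j : Fin n) :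
    pd i (pd j f) x = pd j (pd i f) x := by
  have hs : IsSymmSndFDerivAt ℂ f x :=
    (h.contDiffAt (n := ⊤)).isSymmSndFDerivAt (by simp)
  have hd : DifferentiableAt ℂ (fderiv ℂ f) x := h.fderiv.differentiableAt
  have key : ∀ k l : Fin n, pd k (pd l f) x
      = fderiv ℂ (fderiv ℂ f) x (Pi.single k 1) (Pi.single l 1) := by
    intro k l
    have h2 := hd.hasFDerivAt.clm_apply (hasFDerivAt_const (Pi.single l 1 : Pt n) x)
    rw [pd_eq (f := pd l f) h2 k]
    simp
  rw [key, key, hs.eq]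

lemma pd_mul {n : ℕ} {f g : Fn n} {x : Pt n} (hf : DifferentiableAt ℂ f x)
    (hg : DifferentiableAt ℂ g x) (i : Fin n) :
    pd i (fun y => f y * g y) x = pd i f x * g x + f x * pd i g x := by
  rw [pd_eq (hf.hasFDerivAt.fun_mul hg.hasFDerivAt) i]
  simp [pd]
  ring

lemma pd_sum {n : ℕ} {ι : Type*} (s : Finset ι) {f : ι → Fn n} {x : Pt n}
    (hf : ∀ k ∈ s, DifferentiableAt ℂ (f k) x) (i : Fin n) :
    pd i (fun y => ∑ k ∈ s, f k y) x = ∑ k ∈ s, pd i (f k) x := by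
  rw [pd_eq (HasFDerivAt.fun_sum fun k hk => (hf k hk).hasFDerivAt) i]
  simp [pd]

/-- The projection `(t, s) ↦ t` as a continuous linear map. -/
def prjL (N : ℕ) : Pt (N + 1) →L[ℂ] Pt N :=
  ContinuousLinearMap.pi fun i => ContinuousLinearMap.proj i.castSucc

lemma prjL_single_castSucc {N : ℕ} (i : Fin N) :
    prjL N (Pi.single i.castSucc 1) = Pi.single i 1 := by
  ext j
  simp [prjL, Pi.single_apply]

lemma prjL_single_last {N : ℕ} : prjL N (Pi.single (Fin.last N) 1) = 0 := by
  ext j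
  simp [prjL, Fin.castSucc_ne_last]

lemma hasFDerivAt_prj {N : ℕ} (x : Pt (N + 1)) : HasFDerivAt (prj : Pt (N + 1) → Pt N) (prjL N) x :=
  (prjL N).hasFDerivAt

lemma pd_comp_prj {N : ℕ} {g : Fn N} {x : Pt (N + 1)} (hg : DifferentiableAt ℂ g (prj x))
    (i : Fin N) : pd i.castSucc (fun y => g (prj y)) x = pd i g (prj x) := by
  have h : HasFDerivAt (fun y => g (prj y)) ((fderiv ℂ g (prj x)).comp (prjL N)) x :=
    hg.hasFDerivAt.comp x (hasFDerivAt_prj x)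
  rw [pd_eq h]
  simp [prjL_single_castSucc, pd]

lemma pd_last_comp_prj {N : ℕ} {g : Fn N} {x : Pt (N + 1)} (hg : DifferentiableAt ℂ g (prj x)) :
    pd (Fin.last N) (fun y => g (prj y)) x = 0 := by
  have h : HasFDerivAt (fun y => g (prj y)) ((fderiv ℂ g (prj x)).comp (prjL N)) x :=
    hg.hasFDerivAt.comp x (hasFDerivAt_prj x)
  rw [pd_eq h]
  simp [prjL_single_last]

lemma hasFDerivAt_last {N : ℕ} (x : Pt (N + 1)) :
    HasFDerivAt (fun y : Pt (N + 1) => y (Fin.last N))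
      (ContinuousLinearMap.proj (R := ℂ) (φ := fun _ : Fin (N + 1) => ℂ) (Fin.last N)) x :=
  hasFDerivAt_apply (Fin.last N) x

lemma pd_mul_last {N : ℕ} {g : Fn N} {x : Pt (N + 1)} (hg : DifferentiableAt ℂ g (prj x))
    (i : Fin N) :
    pd i.castSucc (fun y => g (prj y) * y (Fin.last N)) x = pd i g (prj x) * x (Fin.last N) := by
  have h1 : DifferentiableAt ℂ (fun y => g (prj y)) x :=
    hg.comp x (hasFDerivAt_prj x).differentiableAt
  rw [pd_mul h1 (hasFDerivAt_last x).differentiableAt, pd_comp_prj hg, pd_eq (hasFDerivAt_last x)]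
  simp [(Fin.castSucc_ne_last i).symm]

lemma pd_last_mul_last {N : ℕ} {g : Fn N} {x : Pt (N + 1)} (hg : DifferentiableAt ℂ g (prj x)) :
    pd (Fin.last N) (fun y => g (prj y) * y (Fin.last N)) x = g (prj x) := by
  have h1 : DifferentiableAt ℂ (fun y => g (prj y)) x :=
    hg.comp x (hasFDerivAt_prj x).differentiableAt
  rw [pd_mul h1 (hasFDerivAt_last x).differentiableAt, pd_last_comp_prj hg,
    pd_eq (hasFDerivAt_last x)]
  simp

/-- If `c^ν_{αβ} ∂_ν u = ∂_α u ∂_β u` on an open set, then `c^ν_{αβ} ∂_ν∂_γ u + ∂_α∂_β u ∂_γ u`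
is symmetric in `α, γ`. -/
lemma canonical_symm {N : ℕ} {M : Set (Pt N)} (hM : IsOpen M) {F u : Fn N}
    (hF : AnalyticOnNhd ℂ F M) (hu : AnalyticOnNhd ℂ u M) (G : Matrix (Fin N) (Fin N) ℂ)
    (H : ∀ x ∈ M, ∀ α β : Fin N,
      ∑ μ, ∑ ν, pd μ (pd β (pd α F)) x * G μ ν * pd ν u x = pd α u x * pd β u x)
    {x : Pt N} (hx : x ∈ M) (α β γ : Fin N) :
    ∑ μ, ∑ ν, pd μ (pd β (pd α F)) x * G μ ν * pd γ (pd ν u) x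
        + pd β (pd α u) x * pd γ u x =
      ∑ μ, ∑ ν, pd μ (pd β (pd γ F)) x * G μ ν * pd α (pd ν u) x
        + pd β (pd γ u) x * pd α u x := by
  have du : ∀ i, DifferentiableAt ℂ (pd i u) x := fun i =>
    (pd_analytic hu i x hx).differentiableAt
  have dF : ∀ i j k, DifferentiableAt ℂ (pd i (pd j (pd k F))) x := fun i j k =>
    (pd_analytic (pd_analytic (pd_analytic hF k) j) i x hx).differentiableAt
  -- the derivative of the canonical relation along `t^c`
  have key : ∀ a b c : Fin N,
      ∑ μ, ∑ ν, pd c (pd μ (pd b (pd a F))) x * G μ ν * pd ν u x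
        + ∑ μ, ∑ ν, pd μ (pd b (pd a F)) x * G μ ν * pd c (pd ν u) x
      = pd c (pd a u) x * pd b u x + pd a u x * pd c (pd b u) x := by
    intro a b c
    have h := pd_congr hM (fun y hy => H y hy a b) hx c
    rw [pd_mul (du a) (du b)] at h
    rw [← h]
    have dG : ∀ μ ν, DifferentiableAt ℂ (fun y => pd μ (pd b (pd a F)) y * G μ ν) x :=
      fun μ ν => (dF μ b a).mul_const _
    rw [pd_sum _ fun μ _ => DifferentiableAt.fun_sum fun ν _ => (dG μ ν).fun_mul (du ν),
      ← Finset.sum_add_distrib]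
    refine Finset.sum_congr rfl fun μ _ => ?_
    rw [pd_sum _ fun ν _ => (dG μ ν).fun_mul (du ν), ← Finset.sum_add_distrib]
    refine Finset.sum_congr rfl fun ν _ => ?_
    rw [pd_mul (dG μ ν) (du ν), pd_mul (dF μ b a) (differentiableAt_const _),
      pd_eq (hasFDerivAt_const (G μ ν) x)]
    simp
  -- moving the outer index `c` inside past `m` and `b`, then swapping it with `a`
  have move : ∀ a b c m : Fin N, pd c (pd m (pd b (pd a F))) x
      = pd m (pd b (pd c (pd a F))) x := by
    intro a b c m
    rw [pd_comm (pd_analytic (pd_analytic hF a) b x hx) c m]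
    exact pd_congr hM (fun y hy => pd_comm (pd_analytic hF a y hy) c b) hx m
  have sym : ∀ m : Fin N, pd γ (pd m (pd β (pd α F))) x = pd α (pd m (pd β (pd γ F))) x := by
    intro m
    rw [move α β γ m, move γ β α m]
    refine pd_congr hM (fun y hy => ?_) hx m
    exact pd_congr hM (fun z hz => pd_comm (hF z hz) γ α) hy β
  have k1 := key α β γ
  have k2 := key γ β α
  simp only [sym] at k1
  have c1 := pd_comm (hu x hx) α γ
  have c2 := pd_comm (hu x hx) α β
  have c3 := pd_comm (hu x hx) γ β
  rw [c1, c2] at k2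
  rw [c3] at k1
  linear_combination k1 - k2

theorem stmt17 (N : ℕ) (hN : 0 < N)
    (η : Matrix (Fin N) (Fin N) ℂ) (hηsymm : η.IsSymm) (hηinv : IsUnit η.det)
    (M : Set (Pt N)) (hM : IsOpen M) (hMc : IsConnected M)
    (MU : Set (Pt (N + 1))) (hMU : MU = {x | prj x ∈ M})
    -- the Frobenius manifold potential F
    (F : Fn N) (hFan : AnalyticOnNhd ℂ F M)
    (hWDVV : ∀ x ∈ M, ∀ α β γ δ' : Fin N,
      ∑ μ, ∑ ν, pd μ (pd β (pd α F)) x * η⁻¹ μ ν * pd δ' (pd γ (pd ν F)) x =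
      ∑ μ, ∑ ν, pd μ (pd β (pd δ' F)) x * η⁻¹ μ ν * pd α (pd γ (pd ν F)) x)
    (hFunit : ∀ x ∈ M, ∀ α β : Fin N, pd β (pd α (pd ⟨0, hN⟩ F)) x = η α β)
    -- conformality: Euler vector field E^γ = (1-q^γ) t^γ + r^γ, q^1 = 0
    (q r : Fin N → ℂ) (hq1 : q ⟨0, hN⟩ = 0) (δ : ℂ)
    (A : Matrix (Fin N) (Fin N) ℂ) (B : Fin N → ℂ) (C : ℂ)
    (hconf : ∀ x ∈ M,
      ∑ γ, ((1 - q γ) * x γ + r γ) * pd γ F x =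
        (3 - δ) * F x + (1/2) * (∑ α, ∑ β, A α β * x α * x β) + (∑ α, B α * x α) + C)
    -- the function u (e.g. a canonical coordinate) and the constant a
    (u : Fn N) (huan : AnalyticOnNhd ℂ u M) (a : ℂ)
    (hu1 : ∀ x ∈ M, pd ⟨0, hN⟩ u x = 1)
    (hucan : ∀ x ∈ M, ∀ α β : Fin N,
      ∑ ν, (∑ μ, η⁻¹ ν μ * pd μ (pd α (pd β F)) x) * pd ν u x = pd α u x * pd β u x)
    (huE : ∀ x ∈ M, ∑ α, ((1 - q α) * x α + r α) * pd α u x = u x + a)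
    -- F^o(t, s) := u(t) · s
    (Fo : Fn (N + 1)) (hFo : Fo = fun x => u (prj x) * x (Fin.last N)) :
    -- open WDVV equations
    (∀ x ∈ MU, ∀ α β γ : Fin N,
        ∑ μ, ∑ ν, pd μ (pd β (pd α F)) (prj x) * η⁻¹ μ ν *
            pd γ.castSucc (pd ν.castSucc Fo) x
          + pd β.castSucc (pd α.castSucc Fo) x * pd γ.castSucc (pd (Fin.last N) Fo) x =
        ∑ μ, ∑ ν, pd μ (pd β (pd γ F)) (prj x) * η⁻¹ μ ν *
            pd α.castSucc (pd ν.castSucc Fo) x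
          + pd β.castSucc (pd γ.castSucc Fo) x * pd α.castSucc (pd (Fin.last N) Fo) x) ∧
    (∀ x ∈ MU, ∀ α β : Fin N,
        ∑ μ, ∑ ν, pd μ (pd β (pd α F)) (prj x) * η⁻¹ μ ν *
            pd (Fin.last N) (pd ν.castSucc Fo) x
          + pd β.castSucc (pd α.castSucc Fo) x * pd (Fin.last N) (pd (Fin.last N) Fo) x =
        pd β.castSucc (pd (Fin.last N) Fo) x * pd α.castSucc (pd (Fin.last N) Fo) x) ∧
    -- unit condition
    (∀ x ∈ MU, ∀ α : Fin N,
        pd α.castSucc (pd (⟨0, Nat.succ_pos N⟩ : Fin (N + 1)) Fo) x = 0) ∧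
    (∀ x ∈ MU, pd (Fin.last N) (pd (⟨0, Nat.succ_pos N⟩ : Fin (N + 1)) Fo) x = 1) ∧
    -- homogeneity condition
    (∀ x ∈ MU,
        ∑ α, ((1 - q α) * x α.castSucc + r α) * pd α.castSucc Fo x
          + (1 - δ)/2 * x (Fin.last N) * pd (Fin.last N) Fo x =
        (3 - δ)/2 * Fo x + a * x (Fin.last N)) := by
  subst hMU hFo
  have hO : IsOpen {x : Pt (N + 1) | prj x ∈ M} := hM.preimage (prjL N).continuous
  have d0 : ∀ t ∈ M, DifferentiableAt ℂ u t := fun t ht => (huan t ht).differentiableAt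
  have d1 : ∀ t ∈ M, ∀ i, DifferentiableAt ℂ (pd i u) t := fun t ht i =>
    (pd_analytic huan i t ht).differentiableAt
  have hG : ∀ μ ν, η⁻¹ μ ν = η⁻¹ ν μ := fun μ ν => by
    have h : (η⁻¹).transpose = η⁻¹ := by rw [Matrix.transpose_nonsing_inv, hηsymm.eq]
    rw [← congrFun (congrFun h μ) ν, Matrix.transpose_apply]
  have H : ∀ x ∈ M, ∀ α β : Fin N,
      ∑ μ, ∑ ν, pd μ (pd β (pd α F)) x * η⁻¹ μ ν * pd ν u x = pd α u x * pd β u x := by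
    intro x hx α β
    rw [mul_comm, ← hucan x hx β α, Finset.sum_comm]
    refine Finset.sum_congr rfl fun ν _ => ?_
    rw [Finset.sum_mul]
    refine Finset.sum_congr rfl fun μ _ => ?_
    rw [hG μ ν]
    ring
  set Fo : Fn (N + 1) := fun x => u (prj x) * x (Fin.last N) with hFo
  have p1 : ∀ i : Fin N, Set.EqOn (pd i.castSucc Fo)
      (fun y => pd i u (prj y) * y (Fin.last N)) {x | prj x ∈ M} :=
    fun i y hy => pd_mul_last (d0 _ hy) i
  have p2 : Set.EqOn (pd (Fin.last N) Fo) (fun y => u (prj y)) {x | prj x ∈ M} :=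
    fun y hy => pd_last_mul_last (d0 _ hy)
  have q11 : ∀ x, prj x ∈ M → ∀ i j : Fin N, pd i.castSucc (pd j.castSucc Fo) x
      = pd i (pd j u) (prj x) * x (Fin.last N) := fun x hx i j => by
    rw [pd_congr hO (p1 j) hx, pd_mul_last (d1 _ hx j)]
  have q21 : ∀ x, prj x ∈ M → ∀ j : Fin N, pd (Fin.last N) (pd j.castSucc Fo) x
      = pd j u (prj x) := fun x hx j => by
    rw [pd_congr hO (p1 j) hx, pd_last_mul_last (d1 _ hx j)]
  have q12 : ∀ x, prj x ∈ M → ∀ i : Fin N, pd i.castSucc (pd (Fin.last N) Fo) x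
      = pd i u (prj x) := fun x hx i => by
    rw [pd_congr hO p2 hx, pd_comp_prj (d0 _ hx)]
  have q22 : ∀ x, prj x ∈ M → pd (Fin.last N) (pd (Fin.last N) Fo) x = 0 := fun x hx => by
    rw [pd_congr hO p2 hx, pd_last_comp_prj (d0 _ hx)]
  have e0 : (⟨0, Nat.succ_pos N⟩ : Fin (N + 1)) = (⟨0, hN⟩ : Fin N).castSucc := rfl
  refine ⟨fun x hx α β γ => ?_, fun x hx α β => ?_, fun x hx α => ?_, fun x hx => ?_,
    fun x hx => ?_⟩
  · have h := canonical_symm hM hFan huan η⁻¹ H hx α β γ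
    simp only [q11 x hx, q12 x hx, ← mul_assoc, ← Finset.sum_mul]
    linear_combination x (Fin.last N) * h
  · simp only [q21 x hx, q12 x hx, q22 x hx, H _ hx]
    ring
  · rw [e0, q11 x hx, pd_congr (g := fun _ => 1) hM (fun y hy => hu1 y hy) hx,
      pd_eq (hasFDerivAt_const (1 : ℂ) (prj x))]
    simp
  · rw [e0, q21 x hx, hu1 _ hx]
  · rw [p2 hx]
    simp only [p1 _ hx, ← mul_assoc, ← Finset.sum_mul]
    have h := huE _ hx
    simp only [prj] at h
    simp only [hFo]
    linear_combination x (Fin.last N) * h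

end
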